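/- Let x, y, z, w be nonnegative real numbers with x·w > y·z. Then the binary constraint f given by f(0,0)=x, f(0,1)=y, f(1,0)=z, f(1,1)=w belongs to IM_opt; concretely, there exist unary functions u, v : {0,1} → ℝ_{≥0} and real numbers λ₁, λ₂ ∈ [0,1) such that for all a, b ∈ {0,1}: f(a,b) = u(a)·v(b)·(λ₁ if (a,b)=(1,0), else 1)·(λ₂ if (a,b)=(0,1), else 1). -/

import Mathlib

open scoped NNReal

/-! Normalise the columns of `f` by their sums `s b`. The product of `u a = f a a / s a` and
`v b = s b` agrees with `f` on the diagonal, and off the diagonal it is strictly larger than `f`: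
`f a b * s a < f a a * s b` is the determinant inequality with `f a a * f a b` added to both sides.
The two implication factors then lower the off-diagonal entries to the right values. -/

section

variable {K : Type*} [Semifield K] [LinearOrder K]

/-- The constraint `(1, 1, l, 1)`: a weighted form of the implication `a → b`, penalising its only
violation by the factor `l`. -/
def softImp (l : K) (a b : Bool) : K :=
  if a = true ∧ b = false then l else 1

/-- The binary constraints with an `IM_opt` decomposition in which the implication factors of both
directions occur. A factor that is constantly `1` is excluded by `l < 1`, so this implies membership
in `IM_opt` but does not characterise it. -/
def IsStrictIMOpt (f : Bool → Bool → K) : Prop :=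
  ∃ (u v : Bool → K) (l₁ l₂ : K), 0 ≤ u ∧ 0 ≤ v ∧ l₁ ∈ Set.Ico 0 1 ∧ l₂ ∈ Set.Ico 0 1 ∧
    ∀ a b, f a b = u a * v b * softImp l₁ a b * softImp l₂ b a

variable [IsStrictOrderedRing K] {f : Bool → Bool → K}

theorem isStrictIMOpt_of_lt_mul {u v : Bool → K} (hf : 0 ≤ f) (hu : 0 ≤ u) (hv : 0 ≤ v)
    (diag : ∀ a, f a a = u a * v a) (offDiag : ∀ a b, a ≠ b → f a b < u a * v b) :
    IsStrictIMOpt f := by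
  have ratio_mem {a b : Bool} (hab : a ≠ b) : f a b / (u a * v b) ∈ Set.Ico 0 1 :=
    ⟨div_nonneg (hf a b) (mul_nonneg (hu a) (hv b)),
      (div_lt_one ((hf a b).trans_lt (offDiag a b hab))).2 (offDiag a b hab)⟩
  have mul_ratio {a b : Bool} (hab : a ≠ b) : u a * v b * (f a b / (u a * v b)) = f a b :=
    mul_div_cancel₀ _ ((hf a b).trans_lt (offDiag a b hab)).ne'
  refine ⟨u, v, _, _, hu, hv, ratio_mem Bool.false_ne_true.symm,
    ratio_mem Bool.false_ne_true, ?_⟩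
  rintro (_ | _) (_ | _) <;> simp [softImp, diag, mul_ratio]

theorem lt_div_add_mul_add_iff {x y z w : K} (hxz : 0 < x + z) :
    y < x / (x + z) * (y + w) ↔ y * z < x * w := by
  rw [div_mul_eq_mul_div, lt_div_iff₀ hxz, mul_add, mul_add, mul_comm y x, add_lt_add_iff_left]

theorem exists_mul_majorant (hf : 0 ≤ f)
    (h : f false true * f true false < f false false * f true true) :
    ∃ u v : Bool → K, 0 ≤ u ∧ 0 ≤ v ∧ (∀ a, f a a = u a * v a) ∧
      ∀ a b, a ≠ b → f a b < u a * v b := by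
  have diag_mul_pos : 0 < f false false * f true true :=
    (mul_nonneg (hf false true) (hf true false)).trans_lt h
  have diag_pos : ∀ a, 0 < f a a := Bool.forall_bool.2
    ⟨pos_of_mul_pos_left diag_mul_pos (hf true true),
      pos_of_mul_pos_right diag_mul_pos (hf false false)⟩
  let s (b : Bool) : K := f b b + f (!b) b
  have s_pos (b : Bool) : 0 < s b := add_pos_of_pos_of_nonneg (diag_pos b) (hf (!b) b)
  refine ⟨fun a => f a a / s a, s, fun a => div_nonneg (hf a a) (s_pos a).le,
    fun b => (s_pos b).le, fun a => (div_mul_cancel₀ _ (s_pos a).ne').symm, ?_⟩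
  have cross_lt (a : Bool) : f a (!a) * f (!a) a < f a a * f (!a) (!a) := by
    cases a
    · exact h
    · simpa only [Bool.not_true, mul_comm] using h
  intro a b hab
  obtain rfl : b = !a := Bool.eq_not.2 hab.symm
  simpa only [s, Bool.not_not, add_comm] using (lt_div_add_mul_add_iff (s_pos a)).2 (cross_lt a)

theorem stmt0_general (hf : 0 ≤ f)
    (h : f false true * f true false < f false false * f true true) : IsStrictIMOpt f := by
  obtain ⟨u, v, hu, hv, diag, offDiag⟩ := exists_mul_majorant hf h
  exact isStrictIMOpt_of_lt_mul hf hu hv diag offDiag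

end

/-- If `x·w > y·z` for nonnegative reals, then the binary constraint
`f = (x, y, z, w)` belongs to `IM_opt`: it decomposes as a product of two unary
constraints and two "implication-like" factors `(1,1,λᵢ,1)` with `λᵢ ∈ [0,1)`. -/
theorem stmt0 (x y z w : ℝ≥0) (hxw : y * z < x * w)
    (f : Bool → Bool → ℝ≥0)
    (h00 : f false false = x) (h01 : f false true = y)
    (h10 : f true false = z) (h11 : f true true = w) :
    ∃ (u v : Bool → ℝ≥0) (l₁ l₂ : ℝ≥0), l₁ < 1 ∧ l₂ < 1 ∧
      ∀ a b : Bool,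
        f a b = u a * v b *
          (if a = true ∧ b = false then l₁ else 1) *
          (if a = false ∧ b = true then l₂ else 1) := by
  subst h00 h01 h10 h11
  obtain ⟨u, v, l₁, l₂, -, -, h₁, h₂, hf⟩ := stmt0_general (fun _ _ => zero_le) hxw
  exact ⟨u, v, l₁, l₂, h₁.2, h₂.2, by simpa only [softImp, and_comm] using hf⟩
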